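/- arXiv:1905.04785 — 2 statements merged into one kernel-verified Lean document; each statement's English description precedes it below -/
import Mathlib

section
/- Let p > 2 be a prime. Define the equivalence relation ≈_S on the set Y_p of bijections x : ZMod p → ZMod p by x ≈_S y if and only if there exist m, k : ZMod p and signs δ, ε ∈ {1, -1} ⊆ ZMod p such that for all i : ZMod p, y i = ε * x (δ * i + m) + k. Then the number of equivalence classes of Y_p under ≈_S equals (1/(4p)) * ( (p-1)² + p * (p-1)!! + (p-1)! ). -/
open Nat

/-! Sending a cycle `x` to `i ↦ ε * x (δ * i + m) + k` multiplies the permutation `x` on both sides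
by elements of the dihedral group `D`, so the similarity classes are the double cosets `D \ Sₙ / D`.
By Burnside's lemma, `(2n)²` times their number is the number of triples `(x, g, h)` with
`x h x⁻¹ = g`, that is, the sum of the centralizer orders of `h` over all conjugate pairs `(g, h)`.

Let `n > 1` be odd. A rotation of order `d` consists of `n / d` cycles of length `d`, so it is
conjugate to the `φ d` rotations of the same order, and its centralizer has order
`d ^ (n / d) * (n / d)!`. A reflection has exactly one fixed point, so all reflections are
conjugate, with centralizer of order `2 ^ ((n - 1) / 2) * ((n - 1) / 2)! = (n - 1)‼`. A rotation
has odd order and a reflection has order `2`, so no mixed pair contributes. For `n` prime, `d` is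
`1` or `n`. -/

section DoubleCosets

variable {G H A : Type*} [Group G] [Group H] [Group A]

/-- The action of `G × H` on a group `A` by `(g, h) • x = u g * x * (v h)⁻¹`, whose orbits are the
double cosets of `u.range` and `v.range`. It is not an instance, since it depends on `u` and `v`. -/
abbrev twoSidedMulAction (u : G →* A) (v : H →* A) : MulAction (G × H) A where
  smul g x := u g.1 * x * (v g.2)⁻¹
  one_smul x := show u 1 * x * (v 1)⁻¹ = x by simp
  mul_smul a b x := show u (a.1 * b.1) * x * (v (a.2 * b.2))⁻¹ =
      u a.1 * (u b.1 * x * (v b.2)⁻¹) * (v a.2)⁻¹ by simp [mul_assoc]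

theorem orbitRel_twoSidedMulAction (u : G →* A) (v : H →* A) :
    letI := twoSidedMulAction u v
    MulAction.orbitRel (G × H) A = DoubleCoset.setoid (u.range : Set A) v.range := by
  let := twoSidedMulAction u v
  ext x y
  rw [DoubleCoset.rel_iff, Setoid.comm', MulAction.orbitRel_apply, MulAction.mem_orbit_iff]
  constructor
  · rintro ⟨⟨g, h⟩, rfl⟩
    exact ⟨u g, ⟨g, rfl⟩, (v h)⁻¹, inv_mem ⟨h, rfl⟩, rfl⟩
  · rintro ⟨_, ⟨g, rfl⟩, _, ⟨h, rfl⟩, rfl⟩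
    exact ⟨(g, h⁻¹), show u g * x * (v h⁻¹)⁻¹ = _ by rw [map_inv, inv_inv]⟩

theorem card_doubleCoset_mul_card [Finite A] [Fintype G] [Fintype H] (u : G →* A) (v : H →* A) :
    Nat.card (DoubleCoset.Quotient (u.range : Set A) v.range) * (Nat.card G * Nat.card H) =
      ∑ g, ∑ h, Nat.card {x : A // SemiconjBy x (v h) (u g)} := by
  let := twoSidedMulAction u v
  have fixedBy_iff (g : G × H) (x : A) :
      x ∈ MulAction.fixedBy A g ↔ SemiconjBy x (v g.2) (u g.1) :=
    mul_inv_eq_iff_eq_mul.trans eq_comm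
  calc Nat.card (DoubleCoset.Quotient (u.range : Set A) v.range) * (Nat.card G * Nat.card H)
      = Nat.card (Quotient (MulAction.orbitRel (G × H) A) × (G × H)) := by
        rw [Nat.card_prod, Nat.card_prod, orbitRel_twoSidedMulAction, DoubleCoset.Quotient]
    _ = Nat.card (Σ g : G × H, MulAction.fixedBy A g) :=
        (Nat.card_congr (MulAction.sigmaFixedByEquivOrbitsProdGroup (G × H) A)).symm
    _ = ∑ g : G × H, Nat.card {x : A // SemiconjBy x (v g.2) (u g.1)} := by
        rw [Nat.card_sigma]
        exact Finset.sum_congr rfl fun g _ =>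
          Nat.card_congr (Equiv.subtypeEquivRight (fixedBy_iff g))
    _ = ∑ g, ∑ h, Nat.card {x : A // SemiconjBy x (v h) (u g)} := Fintype.sum_prod_type _

theorem card_semiconjBy_of_isConj {a b : A} (hab : IsConj a b) :
    Nat.card {x : A // SemiconjBy x a b} = Nat.card (Subgroup.centralizer {a}) := by
  obtain ⟨c, rfl⟩ := isConj_iff.1 hab
  refine Nat.card_congr ((Equiv.mulLeft c⁻¹).subtypeEquiv fun x => ?_)
  rw [Subgroup.mem_centralizer_singleton_iff, Equiv.coe_mulLeft, SemiconjBy, mul_assoc c⁻¹,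
    inv_mul_eq_iff_eq_mul]
  simp only [mul_assoc]

theorem card_semiconjBy_of_not_isConj {a b : A} (hab : ¬IsConj a b) :
    Nat.card {x : A // SemiconjBy x a b} = 0 :=
  have : IsEmpty {x : A // SemiconjBy x a b} :=
    ⟨fun x => hab (isConj_iff.2 ⟨x, mul_inv_eq_of_eq_mul x.2⟩)⟩
  Nat.card_of_isEmpty

end DoubleCosets

section CycleType

variable {α : Type*} [Fintype α] [DecidableEq α]

theorem cycleType_eq_replicate_of_semiregular {σ : Equiv.Perm α}
    (hσ : ∀ (k : ℕ) (x : α), (σ ^ k) x = x → σ ^ k = 1) :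
    σ.cycleType = Multiset.replicate (σ.support.card / orderOf σ) (orderOf σ) := by
  have length_eq : ∀ l ∈ σ.cycleType, l = orderOf σ := by
    intro l hl
    refine Nat.dvd_antisymm (Equiv.Perm.dvd_of_mem_cycleType hl) (orderOf_dvd_of_pow_eq_one ?_)
    obtain ⟨c, τ, rfl, hdisj, hc, rfl⟩ := Equiv.Perm.mem_cycleType_iff.1 hl
    obtain ⟨x, hx⟩ := hc.nonempty_support
    refine hσ _ x ?_
    have hτ : τ x = x := (hdisj x).resolve_left (Equiv.Perm.mem_support.1 hx)
    rw [hdisj.commute.mul_pow, Equiv.Perm.mul_apply,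
      Equiv.Perm.pow_apply_eq_self_of_apply_eq_self hτ, ← hc.orderOf, pow_orderOf_eq_one,
      Equiv.Perm.one_apply]
  have hrep := Multiset.eq_replicate_card.2 length_eq
  have hsum := σ.sum_cycleType
  rw [hrep, Multiset.sum_replicate, smul_eq_mul] at hsum
  rwa [← hsum, Nat.mul_div_cancel _ (orderOf_pos σ)]

theorem card_centralizer_of_cycleType_eq_replicate {σ : Equiv.Perm α} {k d : ℕ}
    (hσ : σ.cycleType = Multiset.replicate k d) :
    Nat.card (Subgroup.centralizer {σ}) = (Fintype.card α - k * d)! * d ^ k * k ! := by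
  rw [Equiv.Perm.nat_card_centralizer, hσ, Multiset.sum_replicate, Multiset.prod_replicate,
    Multiset.toFinset_replicate, smul_eq_mul]
  split_ifs with hk
  · simp [hk]
  · rw [Finset.prod_singleton, Multiset.count_replicate_self]

end CycleType

section Translations

variable {G : Type*} [AddGroup G]

theorem addRight_eq_one_iff {a : G} : Equiv.addRight a = 1 ↔ a = 0 := by
  simp [Equiv.ext_iff]

theorem orderOf_addRight (a : G) : orderOf (Equiv.addRight a) = addOrderOf a :=
  Nat.dvd_right_iff_eq.1 fun k => by
    rw [orderOf_dvd_iff_pow_eq_one, addOrderOf_dvd_iff_nsmul_eq_zero, Equiv.nsmul_addRight,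
      addRight_eq_one_iff]

theorem cycleType_addRight [Fintype G] [DecidableEq G] {a : G} (ha : a ≠ 0) :
    (Equiv.addRight a).cycleType =
      Multiset.replicate (Fintype.card G / addOrderOf a) (addOrderOf a) := by
  have semiregular (k : ℕ) (x : G) (hx : (Equiv.addRight a ^ k) x = x) :
      Equiv.addRight a ^ k = 1 := by
    rw [Equiv.nsmul_addRight] at hx ⊢
    exact addRight_eq_one_iff.2 (add_eq_left.1 hx)
  have support_eq : (Equiv.addRight a).support = Finset.univ := by
    ext x
    simp [ha]
  rw [cycleType_eq_replicate_of_semiregular semiregular, support_eq, Finset.card_univ,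
    orderOf_addRight]

theorem isConj_addRight_iff [Finite G] {a b : G} :
    IsConj (Equiv.addRight a) (Equiv.addRight b) ↔ addOrderOf a = addOrderOf b := by
  classical
  have := Fintype.ofFinite G
  constructor
  · rintro ⟨c, hc⟩
    simpa only [orderOf_addRight] using hc.orderOf_eq
  · intro hab
    rcases eq_or_ne a 0 with rfl | ha
    · rw [addOrderOf_zero, eq_comm, AddMonoid.addOrderOf_eq_one_iff] at hab
      rw [hab]
    · have hb : b ≠ 0 := by
        rintro rfl
        exact ha (AddMonoid.addOrderOf_eq_one_iff.1 (hab.trans addOrderOf_zero))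
      rw [Equiv.Perm.isConj_iff_cycleType_eq, cycleType_addRight ha, cycleType_addRight hb, hab]

theorem card_centralizer_addRight [Finite G] (a : G) :
    Nat.card (Subgroup.centralizer {Equiv.addRight a}) =
      addOrderOf a ^ (Nat.card G / addOrderOf a) * (Nat.card G / addOrderOf a)! := by
  classical
  have := Fintype.ofFinite G
  rw [Nat.card_eq_fintype_card (α := G)]
  rcases eq_or_ne a 0 with rfl | ha
  · have cycleType_eq : (Equiv.addRight (0 : G)).cycleType = Multiset.replicate 0 1 :=
      Equiv.Perm.cycleType_eq_zero.2 (addRight_eq_one_iff.2 rfl)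
    rw [card_centralizer_of_cycleType_eq_replicate cycleType_eq]
    simp
  · rw [card_centralizer_of_cycleType_eq_replicate (cycleType_addRight ha),
      Nat.div_mul_cancel addOrderOf_dvd_card, Nat.sub_self, Nat.factorial_zero, one_mul]

theorem sum_comp_addOrderOf [IsAddCyclic G] [Fintype G] {M : Type*} [AddCommMonoid M] (f : ℕ → M) :
    ∑ a : G, f (addOrderOf a) = ∑ d ∈ (Fintype.card G).divisors, φ d • f d := by
  rw [← Finset.sum_fiberwise_of_maps_to (t := (Fintype.card G).divisors)
    (g := fun a : G => addOrderOf a)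
    fun a _ => Nat.mem_divisors.2 ⟨addOrderOf_dvd_card, Fintype.card_ne_zero⟩]
  refine Finset.sum_congr rfl fun d hd => ?_
  rw [← IsAddCyclic.card_addOrderOf_eq_totient (Nat.dvd_of_mem_divisors hd), ← Finset.sum_const]
  exact Finset.sum_congr rfl fun a ha => by rw [(Finset.mem_filter.1 ha).2]

theorem sum_card_semiconjBy_addRight [IsAddCyclic G] [Fintype G] :
    ∑ a : G, ∑ b : G,
        Nat.card {x : Equiv.Perm G // SemiconjBy x (Equiv.addRight b) (Equiv.addRight a)} =
      ∑ d ∈ (Fintype.card G).divisors,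
        φ d ^ 2 * (d ^ (Fintype.card G / d) * (Fintype.card G / d)!) := by
  classical
  set c : ℕ → ℕ := fun d => d ^ (Fintype.card G / d) * (Fintype.card G / d)!
  have card_eq (a b : G) :
      Nat.card {x : Equiv.Perm G // SemiconjBy x (Equiv.addRight b) (Equiv.addRight a)} =
        if addOrderOf b = addOrderOf a then c (addOrderOf a) else 0 := by
    split_ifs with hab
    · rw [card_semiconjBy_of_isConj (isConj_addRight_iff.2 hab), card_centralizer_addRight, hab,
        Nat.card_eq_fintype_card]
    · exact card_semiconjBy_of_not_isConj (mt isConj_addRight_iff.1 hab)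
  calc _ = ∑ a : G, φ (addOrderOf a) * c (addOrderOf a) := by
        refine Finset.sum_congr rfl fun a _ => ?_
        rw [Finset.sum_congr rfl fun b _ => card_eq a b, ← Finset.sum_filter, Finset.sum_const,
          IsAddCyclic.card_addOrderOf_eq_totient addOrderOf_dvd_card, smul_eq_mul]
    _ = ∑ d ∈ (Fintype.card G).divisors, φ d ^ 2 * c d := by
        rw [sum_comp_addOrderOf fun d => φ d * c d]
        exact Finset.sum_congr rfl fun d _ => by rw [smul_eq_mul, sq, mul_assoc]

end Translations

section Reflections

variable {G : Type*} [AddCommGroup G]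

theorem subLeft_sq (a : G) : Equiv.subLeft a ^ 2 = 1 := by
  ext x
  simp [sq]

theorem card_support_subLeft [Fintype G] [DecidableEq G] (hG : Odd (Fintype.card G)) (a : G) :
    (Equiv.Perm.support (Equiv.subLeft a)).card = Fintype.card G - 1 := by
  have hcop : (Nat.card G).Coprime 2 :=
    Nat.coprime_two_right.2 (Nat.card_eq_fintype_card (α := G) ▸ hG)
  have support_eq : Equiv.Perm.support (Equiv.subLeft a) =
      Finset.univ.erase ((nsmulCoprime hcop).symm a) := by
    ext x
    rw [Equiv.Perm.mem_support, Finset.mem_erase, Ne, Ne, Equiv.eq_symm_apply, nsmulCoprime_apply,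
      Equiv.subLeft_apply, sub_eq_iff_eq_add, two_nsmul, eq_comm]
    simp
  rw [support_eq, Finset.card_erase_of_mem (Finset.mem_univ _), Finset.card_univ]

theorem cycleType_subLeft [Fintype G] [DecidableEq G] (hG : Odd (Fintype.card G)) (a : G) :
    Equiv.Perm.cycleType (Equiv.subLeft a) = Multiset.replicate ((Fintype.card G - 1) / 2) 2 := by
  have hrep := Equiv.Perm.cycleType_of_pow_prime_eq_one (subLeft_sq a)
  have hsum := Equiv.Perm.sum_cycleType (Equiv.subLeft a)
  rw [hrep, Multiset.sum_replicate, smul_eq_mul, card_support_subLeft hG] at hsum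
  rwa [← hsum, Nat.mul_div_cancel _ two_pos]

theorem card_semiconjBy_subLeft [Finite G] (hG : Odd (Nat.card G)) (a b : G) :
    Nat.card {x : Equiv.Perm G // SemiconjBy x (Equiv.subLeft a) (Equiv.subLeft b)} =
      (Nat.card G - 1)‼ := by
  classical
  have := Fintype.ofFinite G
  rw [Nat.card_eq_fintype_card (α := G)] at hG ⊢
  have hconj : IsConj (Equiv.subLeft a) (Equiv.subLeft b) := by
    rw [Equiv.Perm.isConj_iff_cycleType_eq, cycleType_subLeft hG, cycleType_subLeft hG]
  rw [card_semiconjBy_of_isConj hconj,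
    card_centralizer_of_cycleType_eq_replicate (cycleType_subLeft hG a)]
  obtain ⟨q, hq⟩ := hG
  rw [hq, Nat.add_sub_cancel, Nat.mul_div_cancel_left q two_pos, mul_comm q,
    Nat.add_sub_cancel_left, Nat.factorial_one, one_mul, Nat.doubleFactorial_two_mul]

theorem orderOf_subLeft [Finite G] [Nontrivial G] (hG : Odd (Nat.card G)) (a : G) :
    orderOf (Equiv.subLeft a) = 2 := by
  classical
  have := Fintype.ofFinite G
  rw [Nat.card_eq_fintype_card] at hG
  refine orderOf_eq_prime (subLeft_sq a) fun h => ?_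
  have hcard := card_support_subLeft hG a
  rw [h, Equiv.Perm.support_one, Finset.card_empty] at hcard
  have := Fintype.one_lt_card (α := G)
  omega

theorem not_isConj_subLeft_addRight [Finite G] [Nontrivial G] (hG : Odd (Nat.card G)) (a b : G) :
    ¬IsConj (Equiv.subLeft a) (Equiv.addRight b) := by
  rintro ⟨c, hc⟩
  have hb : addOrderOf b = 2 := by
    rw [← orderOf_addRight, ← hc.orderOf_eq, orderOf_subLeft hG]
  exact hG.not_two_dvd_nat (hb ▸ addOrderOf_dvd_natCard b)

end Reflections

section Dihedral

variable {n : ℕ}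

/-- The action of the dihedral group on the vertices `ZMod n` of the regular `n`-gon, with `r m`
acting as the rotation `i ↦ i + m` and `sr m` as the reflection `i ↦ -m - i`. -/
def dihedralPerm (n : ℕ) : DihedralGroup n →* Equiv.Perm (ZMod n) where
  toFun
    | .r m => Equiv.addRight m
    | .sr m => Equiv.subLeft (-m)
  map_one' := addRight_eq_one_iff.2 rfl
  map_mul' := by
    rintro (i | i) (j | j) <;> ext x <;>
      simp only [DihedralGroup.r_mul_r, DihedralGroup.r_mul_sr, DihedralGroup.sr_mul_r,
        DihedralGroup.sr_mul_sr, Equiv.Perm.mul_apply, Equiv.coe_addRight, Equiv.subLeft_apply] <;>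
      ring

theorem dihedralPerm_r (m : ZMod n) : dihedralPerm n (.r m) = Equiv.addRight m := rfl

theorem dihedralPerm_sr (m : ZMod n) : dihedralPerm n (.sr m) = Equiv.subLeft (-m) := rfl

theorem exists_coe_dihedralPerm_eq_iff {f : ZMod n → ZMod n} :
    (∃ g, ⇑(dihedralPerm n g) = f) ↔
      ∃ ε k : ZMod n, (ε = 1 ∨ ε = -1) ∧ ∀ i, f i = ε * i + k := by
  constructor
  · rintro ⟨m | m, rfl⟩
    · exact ⟨1, m, .inl rfl, fun i => by rw [dihedralPerm_r, Equiv.coe_addRight, one_mul]⟩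
    · exact ⟨-1, -m, .inr rfl, fun i => by rw [dihedralPerm_sr, Equiv.subLeft_apply]; ring⟩
  · rintro ⟨ε, k, rfl | rfl, hf⟩
    · exact ⟨.r k, funext fun i => by rw [dihedralPerm_r, hf, Equiv.coe_addRight, one_mul]⟩
    · exact ⟨.sr (-k), funext fun i => by rw [dihedralPerm_sr, hf, Equiv.subLeft_apply]; ring⟩

theorem sum_dihedralGroup [NeZero n] {M : Type*} [AddCommMonoid M] (f : DihedralGroup n → M) :
    ∑ g, f g = ∑ m, f (.r m) + ∑ m, f (.sr m) := by
  rw [← DihedralGroup.equivSum.symm.sum_comp, Fintype.sum_sum_type]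
  rfl

theorem sum_card_semiconjBy_dihedralPerm [NeZero n] (hn : Odd n) (hn1 : n ≠ 1) :
    ∑ g, ∑ h, Nat.card {x // SemiconjBy x (dihedralPerm n h) (dihedralPerm n g)} =
      ∑ d ∈ n.divisors, φ d ^ 2 * (d ^ (n / d) * (n / d)!) + n ^ 2 * (n - 1)‼ := by
  have := ZMod.nontrivial_iff.2 hn1
  have hodd : Odd (Nat.card (ZMod n)) := by rwa [Nat.card_zmod]
  have card_r_sr (a b : ZMod n) :
      Nat.card {x : Equiv.Perm (ZMod n) // SemiconjBy x (Equiv.addRight a) (Equiv.subLeft b)} = 0 :=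
    card_semiconjBy_of_not_isConj fun h => not_isConj_subLeft_addRight hodd b a h.symm
  have card_sr_r (a b : ZMod n) :
      Nat.card {x : Equiv.Perm (ZMod n) // SemiconjBy x (Equiv.subLeft a) (Equiv.addRight b)} = 0 :=
    card_semiconjBy_of_not_isConj (not_isConj_subLeft_addRight hodd a b)
  simp only [sum_dihedralGroup, dihedralPerm_r, dihedralPerm_sr, Finset.sum_add_distrib,
    sum_card_semiconjBy_addRight, card_semiconjBy_subLeft hodd, card_r_sr, card_sr_r,
    Finset.sum_const, Finset.card_univ, ZMod.card, Nat.card_zmod, smul_eq_mul, mul_zero, add_zero,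
    zero_add]
  ring

end Dihedral

/-- The relation `≈_S` on bijections of `ZMod n`, for arbitrary `n`: equality of the cycles they
encode up to a rotation or reflection of the drawing (`ε`, `k`); the parameters `δ` and `m` account
for the choice of starting point and direction along the cycle. -/
def CycleSimilar (n : ℕ) (x y : {x : ZMod n → ZMod n // Function.Bijective x}) : Prop :=
  ∃ (m k δ ε : ZMod n), (δ = 1 ∨ δ = -1) ∧ (ε = 1 ∨ ε = -1) ∧
    ∀ i : ZMod n, y.1 i = ε * x.1 (δ * i + m) + k

theorem cycleSimilar_iff {n : ℕ} {x y : {x : ZMod n → ZMod n // Function.Bijective x}} :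
    CycleSimilar n x y ↔ ∃ σ ∈ (dihedralPerm n).range, ∃ τ ∈ (dihedralPerm n).range,
      Equiv.bijectiveEquiv y = σ * Equiv.bijectiveEquiv x * τ := by
  constructor
  · rintro ⟨m, k, δ, ε, hδ, hε, hxy⟩
    obtain ⟨g, hg⟩ := exists_coe_dihedralPerm_eq_iff.2 ⟨ε, k, hε, fun _ => rfl⟩
    obtain ⟨h, hh⟩ := exists_coe_dihedralPerm_eq_iff.2 ⟨δ, m, hδ, fun _ => rfl⟩
    refine ⟨_, ⟨g, rfl⟩, _, ⟨h, rfl⟩, Equiv.ext fun i => ?_⟩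
    rw [Equiv.Perm.mul_apply, Equiv.Perm.mul_apply, hg, hh]
    exact hxy i
  · rintro ⟨_, ⟨g, rfl⟩, _, ⟨h, rfl⟩, hxy⟩
    obtain ⟨ε, k, hε, hg⟩ := exists_coe_dihedralPerm_eq_iff.1 ⟨g, rfl⟩
    obtain ⟨δ, m, hδ, hh⟩ := exists_coe_dihedralPerm_eq_iff.1 ⟨h, rfl⟩
    refine ⟨m, k, δ, ε, hδ, hε, fun i => ?_⟩
    rw [← hh, ← hg]
    exact DFunLike.congr_fun hxy i

theorem card_quot_cycleSimilar (n : ℕ) :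
    Nat.card (Quot (CycleSimilar n)) =
      Nat.card (DoubleCoset.Quotient ((dihedralPerm n).range : Set (Equiv.Perm (ZMod n)))
        (dihedralPerm n).range) :=
  Nat.card_congr <| Quot.congr Equiv.bijectiveEquiv fun _ _ =>
    cycleSimilar_iff.trans DoubleCoset.rel_iff.symm

theorem cycles_similarity_classes_prime_general {n : ℕ} (hn : Odd n) (hn1 : n ≠ 1) :
    (Nat.card (Quot (CycleSimilar n)) : ℚ) =
      1 / (4 * (n : ℚ) ^ 2) *
        (∑ d ∈ n.divisors, φ d ^ 2 * (d ^ (n / d) * (n / d)!) + n ^ 2 * (n - 1)‼ : ℕ) := by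
  have : NeZero n := ⟨hn.pos.ne'⟩
  have hburnside := card_doubleCoset_mul_card (dihedralPerm n) (dihedralPerm n)
  rw [← card_quot_cycleSimilar, sum_card_semiconjBy_dihedralPerm hn hn1,
    DihedralGroup.nat_card] at hburnside
  rw [← hburnside]
  have hn0 : (n : ℚ) ≠ 0 := NeZero.ne _
  push_cast
  field_simp
  ring

/-- Corollary (cycles in `K_p` up to rotation and reflection, `p > 2` prime):
the number of equivalence classes equals `(1/(4p)) * ((p-1)² + p(p-1)!! + (p-1)!)`. -/
theorem cycles_similarity_classes_prime (p : ℕ) (hp : p.Prime) (hp2 : 2 < p) :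
    (Nat.card (Quot (fun x y : {x : ZMod p → ZMod p // Function.Bijective x} =>
        ∃ (m k δ ε : ZMod p), (δ = 1 ∨ δ = -1) ∧ (ε = 1 ∨ ε = -1) ∧
          ∀ i : ZMod p, y.1 i = ε * x.1 (δ * i + m) + k)) : ℚ) =
      (1 / (4 * (p : ℚ))) *
        (((p - 1) ^ 2 + p * Nat.doubleFactorial (p - 1) + (p - 1)! : ℕ)) := by
  have hp0 : (p : ℚ) ≠ 0 := mod_cast hp.ne_zero
  refine (cycles_similarity_classes_prime_general (hp.odd_of_ne_two hp2.ne') hp.ne_one).trans ?_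
  rw [hp.sum_divisors, Nat.totient_prime hp, Nat.div_self hp.pos, Nat.div_one,
    ← Nat.mul_factorial_pred hp.ne_zero]
  simp only [Nat.totient_one, Nat.factorial_one, one_pow, pow_one, one_mul, mul_one]
  push_cast
  field_simp
  ring
end

section
/- Let n ≥ 3 be an integer. Then Σ_{k : ZMod n} #{ x : Fin n → ZMod n bijective | ∀ i : Fin n, x i = -(x (n - 1 - i)) - k } equals (n/2) * n!! if n is even and n * (n-1)!! if n is odd. -/
open Nat

/-
The string `x` is fixed when it intertwines two involutions, reversal of positions and the
reflection `y ↦ -y - k` of labels. For involutions with as many fixed points on each side, the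
intertwining bijections form a torsor under the centralizer of the first involution, whose order
is read off its cycle type; if only one side has a fixed point there are none. Reversal has at most
one fixed point, while `y ↦ -y - k` has a fixed point exactly when `k` is twice a label: always
(and uniquely) for odd `n`, for half of all `k` for even `n`.
-/

open Function Equiv

section Involutions

variable {α β : Type*}

theorem card_equiv_semiconj {σ : Perm α} {τ : Perm β} (e : α ≃ β) (he : Semiconj e σ τ) :
    Nat.card {g : α ≃ β // Semiconj g σ τ} = Nat.card (Subgroup.centralizer {σ}) := by
  refine Nat.card_congr (((Equiv.refl α).equivCongr e.symm).subtypeEquiv fun g => ?_)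
  have he_symm : Semiconj e.symm τ σ := he.inverse_left e.left_inv e.right_inv
  simp only [Subgroup.mem_centralizer_singleton_iff, Perm.ext_iff, Perm.mul_apply, Semiconj,
    equivCongr_apply_apply, refl_symm, refl_apply, ← he_symm.eq, e.symm.apply_eq_iff_eq]

theorem cycleType_of_involutive [Fintype α] [DecidableEq α] {σ : Perm α} (hσ : Involutive σ) :
    σ.cycleType = Multiset.replicate ((Nat.card α - Nat.card (fixedPoints σ)) / 2) 2 := by
  have hreplicate : σ.cycleType = Multiset.replicate σ.cycleType.card 2 :=
    Perm.cycleType_of_pow_prime_eq_one (by ext i; simp [pow_two, hσ i])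
  have hsum : σ.cycleType.sum = σ.cycleType.card * 2 := by
    conv_lhs => rw [hreplicate, Multiset.sum_replicate, smul_eq_mul]
  have hfix := σ.card_fixedPoints
  have hle := σ.sum_cycleType_le
  rw [hreplicate, Nat.card_eq_fintype_card, Nat.card_eq_fintype_card]
  congr 1
  lia

theorem even_card_sub_card_fixedPoints [Finite α] {f : α → α} (hf : Involutive f) :
    Even (Nat.card α - Nat.card (fixedPoints f)) := by
  classical
  have := Fintype.ofFinite α
  have hmod : Fintype.card α ≡ Fintype.card (fixedPoints f) [MOD 2] :=
    Perm.card_fixedPoints_modEq (f := f) (n := 1) (funext hf)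
  rw [Nat.card_eq_fintype_card, Nat.card_eq_fintype_card, even_iff_two_dvd]
  exact (Nat.modEq_iff_dvd' (Fintype.card_subtype_le _)).1 hmod.symm

theorem card_fixedPoints_of_subsingleton [Finite α] {f : α → α} (hf : Involutive f)
    (hfix : (fixedPoints f).Subsingleton) : Nat.card (fixedPoints f) = Nat.card α % 2 := by
  have := hfix.coe_sort
  have hle_one : Nat.card (fixedPoints f) ≤ 1 := Finite.card_le_one_iff_subsingleton.2 this
  have hle : Nat.card (fixedPoints f) ≤ Nat.card α := Finite.card_subtype_le _
  obtain ⟨m, hm⟩ := even_card_sub_card_fixedPoints hf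
  lia

theorem card_centralizer_of_involutive [Finite α] {σ : Perm α} (hσ : Involutive σ) :
    Nat.card (Subgroup.centralizer {σ}) =
      (Nat.card (fixedPoints σ))! * (Nat.card α - Nat.card (fixedPoints σ))‼ := by
  classical
  have := Fintype.ofFinite α
  obtain ⟨m, hm⟩ := even_card_sub_card_fixedPoints hσ
  have hcycle : σ.cycleType = Multiset.replicate m 2 := by
    rw [cycleType_of_involutive hσ, hm, ← two_mul, Nat.mul_div_cancel_left m two_pos]
  have hprod :
      ∏ k ∈ (Multiset.replicate m 2).toFinset, ((Multiset.replicate m 2).count k)! = m ! := by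
    rcases m.eq_zero_or_pos with rfl | hpos
    · simp
    · simp [Multiset.toFinset_replicate, hpos.ne']
  rw [Perm.nat_card_centralizer, ← σ.card_fixedPoints, hcycle, hprod, Multiset.prod_replicate, hm,
    ← two_mul, Nat.doubleFactorial_two_mul, Nat.card_eq_fintype_card, mul_assoc]

theorem card_fixedPoints_eq_of_semiconj {f : α → α} {g : β → β} (e : α ≃ β)
    (he : Semiconj e f g) : Nat.card (fixedPoints f) = Nat.card (fixedPoints g) :=
  Nat.card_congr <| e.subtypeEquiv fun i => by
    rw [mem_fixedPoints_iff, mem_fixedPoints_iff, ← he.eq, e.apply_eq_iff_eq]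

theorem exists_equiv_semiconj_of_involutive [Finite α] [Finite β] {f : α → α} {g : β → β}
    (hf : Involutive f) (hg : Involutive g) (hcard : Nat.card α = Nat.card β)
    (hfix : Nat.card (fixedPoints f) = Nat.card (fixedPoints g)) :
    ∃ e : α ≃ β, Semiconj e f g := by
  classical
  have := Fintype.ofFinite β
  obtain ⟨d⟩ := Finite.card_eq.1 hcard
  let σ : Perm β := d.permCongr hf.toPerm
  have hσ_apply (i : α) : σ (d i) = d (f i) := by simp [σ]
  have hσ : Involutive σ := d.surjective.forall.2 fun i => by rw [hσ_apply, hσ_apply, hf]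
  have hσ_fix : Nat.card (fixedPoints σ) = Nat.card (fixedPoints g) :=
    (card_fixedPoints_eq_of_semiconj d fun i => (hσ_apply i).symm).symm.trans hfix
  have hconj : IsConj σ hg.toPerm := by
    rw [Perm.isConj_iff_cycleType_eq, cycleType_of_involutive hσ,
      cycleType_of_involutive hg.toPerm_involutive, hσ_fix, hg.coe_toPerm]
  obtain ⟨c, hc⟩ := isConj_iff.1 hconj
  have hcσ (j : β) : c (σ j) = g (c j) := DFunLike.congr_fun (mul_inv_eq_iff_eq_mul.1 hc) j
  exact ⟨d.trans c, fun i => by rw [trans_apply, ← hσ_apply, hcσ, trans_apply]⟩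

theorem card_equiv_semiconj_of_involutive [Finite α] [Finite β] {f : α → α} {g : β → β}
    (hf : Involutive f) (hg : Involutive g) (hcard : Nat.card α = Nat.card β)
    (hfix : Nat.card (fixedPoints f) = Nat.card (fixedPoints g)) :
    Nat.card {e : α ≃ β // Semiconj e f g} =
      (Nat.card (fixedPoints f))! * (Nat.card α - Nat.card (fixedPoints f))‼ := by
  obtain ⟨e, he⟩ := exists_equiv_semiconj_of_involutive hf hg hcard hfix
  exact (card_equiv_semiconj (σ := hf.toPerm) (τ := hg.toPerm) e he).trans
    (card_centralizer_of_involutive hf.toPerm_involutive)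

theorem card_equiv_semiconj_of_subsingleton_fixedPoints [Finite α] [Finite β]
    {f : α → α} {g : β → β} (hf : Involutive f) (hg : Involutive g)
    (hcard : Nat.card α = Nat.card β) (hf_fix : (fixedPoints f).Subsingleton)
    (hg_fix : (fixedPoints g).Subsingleton) :
    Nat.card {e : α ≃ β // Semiconj e f g} = (Nat.card α - Nat.card α % 2)‼ := by
  have hf_card := card_fixedPoints_of_subsingleton hf hf_fix
  have hg_card := card_fixedPoints_of_subsingleton hg hg_fix
  have hfactorial : (Nat.card α % 2)! = 1 :=
    Nat.factorial_eq_one.2 (Nat.le_of_lt_succ (Nat.mod_lt _ two_pos))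
  rw [card_equiv_semiconj_of_involutive hf hg hcard (by rw [hf_card, hg_card, hcard]), hf_card,
    hfactorial, one_mul]

end Involutions

section Reflections

variable {α G : Type*} [AddCommGroup G]

theorem neg_sub_involutive (a : G) : Involutive fun y : G => -y - a := fun y => by simp

theorem mem_fixedPoints_neg_sub_iff {a y : G} :
    y ∈ fixedPoints (fun z : G => -z - a) ↔ a = -y + -y := by
  rw [mem_fixedPoints_iff, sub_eq_iff_eq_add', ← sub_eq_iff_eq_add, sub_eq_add_neg, eq_comm]

theorem nonempty_fixedPoints_neg_sub_iff {a : G} :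
    (fixedPoints fun y : G => -y - a).Nonempty ↔ Even a := by
  simp only [Set.Nonempty, mem_fixedPoints_neg_sub_iff]
  exact (Equiv.neg G).exists_congr_left.trans (by simp [Even])

theorem subsingleton_fixedPoints_neg_sub (hG : Odd (Nat.card G)) (a : G) :
    (fixedPoints fun y : G => -y - a).Subsingleton := by
  intro y hy z hz
  rw [mem_fixedPoints_neg_sub_iff, ← two_nsmul] at hy hz
  exact neg_injective ((nsmulCoprime hG.coprime_two_right).injective (hy.symm.trans hz))

theorem card_not_even_of_even_card [IsAddCyclic G] [Finite G] (hG : Even (Nat.card G)) :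
    Nat.card {a : G // ¬Even a} = Nat.card G / 2 := by
  classical
  have := Fintype.ofFinite G
  have hrange : Nat.card {a : G // Even a} = Nat.card G / 2 := by
    rw [← Nat.gcd_eq_right hG.two_dvd, ← IsAddCyclic.card_nsmulAddMonoidHom_range]
    exact Nat.card_congr (Equiv.subtypeEquivRight fun a => by
      simp [even_iff_exists_two_nsmul, eq_comm])
  rw [Nat.card_eq_fintype_card, Fintype.card_subtype_compl, ← Nat.card_eq_fintype_card,
    ← Nat.card_eq_fintype_card, hrange]
  obtain ⟨m, hm⟩ := hG
  lia

theorem card_bijective_eq_card_equiv_semiconj (s : α → α) (a : G) :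
    Nat.card {x : α → G // Bijective x ∧ ∀ i, x i = -(x (s i)) - a} =
      Nat.card {e : α ≃ G // Semiconj e s fun y => -y - a} := by
  refine Nat.card_congr ((subtypeSubtypeEquivSubtypeInter _ _).symm.trans
    (bijectiveEquiv.subtypeEquiv fun x => forall_congr' fun i => ?_))
  exact (neg_sub_involutive a).eq_iff.symm.trans eq_comm

section Counts

variable [Finite α] [Finite G] {s : α → α} (hs : Involutive s)
  (hfix : (fixedPoints s).Subsingleton) (hcard : Nat.card α = Nat.card G)

include hs hfix hcard

theorem card_equiv_semiconj_neg_sub_of_odd (hG : Odd (Nat.card G)) (a : G) :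
    Nat.card {e : α ≃ G // Semiconj e s fun y => -y - a} = (Nat.card G - 1)‼ := by
  rw [card_equiv_semiconj_of_subsingleton_fixedPoints hs (neg_sub_involutive a) hcard hfix
    (subsingleton_fixedPoints_neg_sub hG a), hcard, Nat.odd_iff.1 hG]

theorem card_equiv_semiconj_neg_sub_of_even [DecidablePred (Even : G → Prop)]
    (hG : Even (Nat.card G)) (a : G) :
    Nat.card {e : α ≃ G // Semiconj e s fun y => -y - a} =
      if Even a then 0 else (Nat.card G)‼ := by
  split_ifs with ha
  · have hs_card : Nat.card (fixedPoints s) = 0 := by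
      rw [card_fixedPoints_of_subsingleton hs hfix, hcard, Nat.even_iff.1 hG]
    have := (nonempty_fixedPoints_neg_sub_iff.2 ha).to_subtype
    have : IsEmpty {e : α ≃ G // Semiconj e s fun y => -y - a} := ⟨fun ⟨e, he⟩ =>
      Nat.card_pos.ne (hs_card.symm.trans (card_fixedPoints_eq_of_semiconj e he))⟩
    exact Nat.card_of_isEmpty
  · have hfix_empty : (fixedPoints fun y : G => -y - a) = ∅ :=
      Set.not_nonempty_iff_eq_empty.1 (mt nonempty_fixedPoints_neg_sub_iff.1 ha)
    rw [card_equiv_semiconj_of_subsingleton_fixedPoints hs (neg_sub_involutive a) hcard hfix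
      (hfix_empty ▸ Set.subsingleton_empty), hcard, Nat.even_iff.1 hG, Nat.sub_zero]

end Counts

end Reflections

theorem fixed_strings_v_srk_general {α G : Type*} [AddCommGroup G] [IsAddCyclic G] [Fintype G]
    {s : α → α} (hs : Involutive s) (hfix : (fixedPoints s).Subsingleton)
    (hcard : Nat.card α = Nat.card G) :
    ∑ a : G, Nat.card {x : α → G // Bijective x ∧ ∀ i, x i = -(x (s i)) - a} =
      if Even (Nat.card G) then (Nat.card G / 2) * (Nat.card G)‼
      else Nat.card G * (Nat.card G - 1)‼ := by
  classical
  have : Finite α := Nat.finite_of_card_ne_zero (hcard ▸ Nat.card_pos.ne')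
  simp only [card_bijective_eq_card_equiv_semiconj s]
  split_ifs with hG
  · simp only [card_equiv_semiconj_neg_sub_of_even hs hfix hcard hG]
    rw [Finset.sum_ite, Finset.sum_const_zero, zero_add, Finset.sum_const, smul_eq_mul,
      ← card_not_even_of_even_card hG, ← Fintype.card_subtype,
      Nat.card_eq_fintype_card (α := {a : G // ¬Even a})]
  · have hodd : Odd (Nat.card G) := Nat.not_even_iff_odd.1 hG
    simp only [card_equiv_semiconj_neg_sub_of_odd hs hfix hcard hodd, Finset.sum_const,
      Finset.card_univ, Nat.card_eq_fintype_card, smul_eq_mul]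

/-- The total number of strings fixed by the elements `(v, s r^k)` (reverse the
string and replace every label `x` by `-x - k`) is `(n/2)·n!!` if `n` is even and
`n·(n-1)!!` if `n` is odd. -/
theorem fixed_strings_v_srk (n : ℕ) (hn : 3 ≤ n) [NeZero n] :
    ∑ k : ZMod n,
        Nat.card {x : Fin n → ZMod n // Function.Bijective x ∧
          ∀ i : Fin n, x i = -(x i.rev) - k} =
      if Even n then (n / 2) * Nat.doubleFactorial n
      else n * Nat.doubleFactorial (n - 1) := by
  have hfix : (fixedPoints (Fin.rev : Fin n → Fin n)).Subsingleton := fun i hi j hj => by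
    rw [mem_fixedPoints_iff, Fin.ext_iff, Fin.val_rev] at hi hj
    lia
  simpa using fixed_strings_v_srk_general (G := ZMod n) Fin.rev_involutive hfix (by simp)
end
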